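/- arXiv:math/0609797 — 2 statements merged into one kernel-verified Lean document; each statement's English description precedes it below -/
import Mathlib

section
/- (Main asymptotic term derived from the R-matrix.) The limit as n → ∞ of π(n) · log n / n equals 1; that is, π(n) ~ n / log n. -/
open Filter Topology

/-! Put `f(t) = e^{-t} ψ(e^t)`. For `Re s > 0`, the Laplace transform of `f - 1` at `s` is
`-ζ'/ζ(s + 1) / (s + 1) - 1/s`, which extends continuously to the line `Re s = 0` because `ζ` has no
zeros on `Re s = 1`. Testing this transform against a triangle function along `Re s = 0` gives the
average of `f - 1` near `T` against a Fejér kernel, and by the Riemann–Lebesgue lemma this average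
tends to `0` as `T → ∞`. Hence every Fejér average of `f` tends to `1`. Since `e^t f(t)` is
monotone, `f` varies by a factor of at most `e^{2δ}` in the relevant direction over an interval of
length `2δ`, so its values are squeezed between averages against increasingly concentrated Fejér
kernels, which gives `f(t) → 1`, that is `ψ(x) ~ x`. Chebyshev's estimates then give `θ(x) ~ x` and
`π(x) ~ x / log x`. -/

namespace WienerIkehara

open MeasureTheory Complex Set Asymptotics
open scoped Real FourierTransform

section FejerKernel

/-- The triangle function of half-width `R`, whose Fourier transform is the Fejér kernel. -/
noncomputable def triangle (R u : ℝ) : ℝ := max 0 (1 - |u| / R)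

/-- The Fejér kernel `R sinc² (π R x)`: a nonnegative approximate identity as `R → ∞` whose
Fourier transform has compact support. -/
noncomputable def fejerKernel (R x : ℝ) : ℝ := R * Real.sinc (π * R * x) ^ 2

variable {R : ℝ}

lemma continuous_triangle (R : ℝ) : Continuous (triangle R) := by
  unfold triangle
  fun_prop

lemma triangle_neg (R u : ℝ) : triangle R (-u) = triangle R u := by
  simp only [triangle, abs_neg]

lemma triangle_zero (R : ℝ) : triangle R 0 = 1 := by simp [triangle]

lemma triangle_of_le_abs (hR : 0 < R) {u : ℝ} (hu : R ≤ |u|) : triangle R u = 0 :=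
  max_eq_left (sub_nonpos.mpr ((one_le_div hR).mpr hu))

lemma triangle_of_abs_le (hR : 0 < R) {u : ℝ} (hu : |u| ≤ R) : triangle R u = 1 - |u| / R :=
  max_eq_right (sub_nonneg.mpr ((div_le_one hR).mpr hu))

lemma hasCompactSupport_triangle (hR : 0 < R) : HasCompactSupport (triangle R) :=
  HasCompactSupport.intro (isCompact_closedBall 0 R) fun u hu =>
    triangle_of_le_abs hR (by simpa using (not_le.mp (mem_closedBall_zero_iff.not.mp hu)).le)

lemma integrable_triangle (hR : 0 < R) : Integrable (triangle R) :=
  (continuous_triangle R).integrable_of_hasCompactSupport (hasCompactSupport_triangle hR)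

lemma fourier_ofReal_of_even {f : ℝ → ℝ} (hf : ∀ u, f (-u) = f u) (hfi : Integrable f) (ξ : ℝ) :
    𝓕 (fun u => (f u : ℂ)) ξ = (∫ u, f u * Real.cos (2 * π * ξ * u) : ℝ) := by
  have hcos : Integrable fun u => ((f u * Real.cos (2 * π * ξ * u) : ℝ) : ℂ) :=
    (hfi.mul_bdd (c := 1) (by fun_prop) (ae_of_all _ fun u => Real.abs_cos_le_one _)).ofReal
  have hsin : Integrable fun u => ((f u * Real.sin (2 * π * ξ * u) : ℝ) : ℂ) :=
    (hfi.mul_bdd (c := 1) (by fun_prop) (ae_of_all _ fun u => Real.abs_sin_le_one _)).ofReal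
  have hodd : ∫ u, f u * Real.sin (2 * π * ξ * u) = 0 := by
    have h := integral_neg_eq_self (fun u => f u * Real.sin (2 * π * ξ * u)) volume
    simp only [hf, mul_neg, Real.sin_neg, integral_neg] at h
    exact self_eq_neg.mp h.symm
  have hexp (u : ℝ) : cexp ((-2 * π * u * ξ : ℝ) * I) • (f u : ℂ) =
      (f u * Real.cos (2 * π * ξ * u) : ℝ) - (f u * Real.sin (2 * π * ξ * u) : ℝ) * I := by
    rw [show -2 * π * u * ξ = -(2 * π * ξ * u) by ring, exp_mul_I, ← ofReal_cos, ← ofReal_sin,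
      Real.cos_neg, Real.sin_neg]
    push_cast [smul_eq_mul]
    ring
  simp_rw [Real.fourier_real_eq_integral_exp_smul, hexp]
  rw [integral_sub hcos (hsin.mul_const I), integral_mul_const,
    integral_complex_ofReal, integral_complex_ofReal, hodd, ofReal_zero, zero_mul, sub_zero]

lemma integral_one_sub_div_mul_cos (hR : R ≠ 0) (b : ℝ) :
    ∫ u in 0..R, (1 - u / R) * Real.cos (b * u) = R / 2 * Real.sinc (b * R / 2) ^ 2 := by
  rcases eq_or_ne b 0 with rfl | hb
  · simp only [zero_mul, Real.cos_zero, mul_one, zero_div, Real.sinc_zero, one_pow]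
    rw [intervalIntegral.integral_sub (by simp) (by simp)]
    simp only [intervalIntegral.integral_const, intervalIntegral.integral_div, integral_id,
      smul_eq_mul]
    field_simp
    ring
  · have hderiv (u : ℝ) : HasDerivAt
        (fun u => (1 - u / R) * (Real.sin (b * u) / b) - Real.cos (b * u) / (R * b ^ 2))
        ((1 - u / R) * Real.cos (b * u)) u := by
      have hb' : HasDerivAt (fun u => b * u) b u := by simpa using (hasDerivAt_id u).const_mul b
      have hlin := ((hasDerivAt_id u).div_const R).const_sub 1
      convert! (hlin.mul (hb'.sin.div_const b)).sub (hb'.cos.div_const (R * b ^ 2)) using 1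
      simp only [id]
      field_simp
      ring
    rw [intervalIntegral.integral_eq_sub_of_hasDerivAt (fun u _ => hderiv u)
      (Continuous.intervalIntegrable (by fun_prop) _ _), Real.sinc_of_ne_zero (by positivity),
      div_pow, Real.sin_sq_eq_half_sub, mul_div_cancel₀ (b * R) two_ne_zero]
    simp only [mul_zero, Real.sin_zero, Real.cos_zero]
    field_simp
    ring

lemma integral_triangle_mul_cos (hR : 0 < R) (b : ℝ) :
    ∫ u, triangle R u * Real.cos (b * u) = R * Real.sinc (b * R / 2) ^ 2 := by
  have heven (u : ℝ) : triangle R u * Real.cos (b * u) = triangle R |u| * Real.cos (b * |u|) := by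
    rcases abs_choice u with h | h <;> simp [h, triangle_neg]
  have hsupp : ∫ u in Ioi 0, triangle R u * Real.cos (b * u) =
      ∫ u in Ioc 0 R, triangle R u * Real.cos (b * u) := by
    refine (setIntegral_eq_of_subset_of_forall_sdiff_eq_zero measurableSet_Ioi
      Ioc_subset_Ioi_self fun u hu => ?_)
    have hRu : R < u := not_le.mp fun h => hu.2 ⟨hu.1, h⟩
    rw [triangle_of_le_abs hR (hRu.le.trans (le_abs_self u)), zero_mul]
  calc ∫ u, triangle R u * Real.cos (b * u)
      = 2 * ∫ u in Ioi 0, triangle R u * Real.cos (b * u) :=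
        (integral_congr_ae (ae_of_all _ heven)).trans
          (integral_comp_abs (f := fun u => triangle R u * Real.cos (b * u)))
    _ = 2 * ∫ u in 0..R, (1 - u / R) * Real.cos (b * u) := by
        rw [hsupp, intervalIntegral.integral_of_le hR.le]
        congr 1
        refine setIntegral_congr_fun measurableSet_Ioc fun u hu => ?_
        simp only [triangle_of_abs_le hR ((abs_of_pos hu.1).trans_le hu.2), abs_of_pos hu.1]
    _ = R * Real.sinc (b * R / 2) ^ 2 := by
        rw [integral_one_sub_div_mul_cos hR.ne']
        ring

theorem fourier_triangle (hR : 0 < R) :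
    𝓕 (fun u => (triangle R u : ℂ)) = fun ξ => (fejerKernel R ξ : ℂ) := by
  ext ξ
  rw [fourier_ofReal_of_even (triangle_neg R) (integrable_triangle hR),
    integral_triangle_mul_cos hR, fejerKernel,
    show 2 * π * ξ * R / 2 = π * R * ξ by ring]

lemma sinc_sq_le (x : ℝ) : Real.sinc x ^ 2 ≤ 2 * (1 + x ^ 2)⁻¹ := by
  have hle : Real.sinc x ^ 2 ≤ 1 := (sq_le_one_iff_abs_le_one _).mpr (Real.abs_sinc_le_one x)
  have hsin : (x * Real.sinc x) ^ 2 ≤ 1 := by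
    rcases eq_or_ne x 0 with rfl | hx
    · simp
    · rw [Real.sinc_of_ne_zero hx, mul_div_cancel₀ _ hx]
      exact Real.sin_sq_le_one x
  rw [← div_eq_mul_inv, le_div_iff₀ (by positivity)]
  linarith [mul_pow x (Real.sinc x) 2]

lemma integrable_sinc_sq : Integrable fun x => Real.sinc x ^ 2 :=
  (integrable_inv_one_add_sq.const_mul 2).mono' (by fun_prop)
    (ae_of_all _ fun x => by
      rw [Real.norm_of_nonneg (sq_nonneg _)]
      exact sinc_sq_le x)

lemma fejerKernel_nonneg (hR : 0 ≤ R) (x : ℝ) : 0 ≤ fejerKernel R x :=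
  mul_nonneg hR (sq_nonneg _)

lemma integrable_fejerKernel (hR : R ≠ 0) : Integrable (fejerKernel R) :=
  (integrable_sinc_sq.comp_mul_left' (mul_ne_zero Real.pi_ne_zero hR)).const_mul R

lemma integral_fejerKernel (hR : 0 < R) : ∫ x, fejerKernel R x = 1 := by
  have hcont : Continuous fun u => (triangle R u : ℂ) :=
    continuous_ofReal.comp (continuous_triangle R)
  have hint : Integrable (𝓕 fun u => (triangle R u : ℂ)) := by
    rw [fourier_triangle hR]
    exact (integrable_fejerKernel hR.ne').ofReal
  have hinv := congrFun (hcont.fourierInv_fourier_eq (integrable_triangle hR).ofReal hint) 0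
  rw [Real.fourierInv_eq, fourier_triangle hR] at hinv
  simp only [inner_zero_right, AddChar.map_zero_eq_one, one_smul, triangle_zero] at hinv
  rw [integral_complex_ofReal] at hinv
  exact_mod_cast hinv

lemma tendsto_setIntegral_Icc_fejerKernel {δ : ℝ} (hδ : 0 < δ) :
    Tendsto (fun R => ∫ x in Icc (-δ) δ, fejerKernel R x) atTop (𝓝 1) := by
  have hscale (R : ℝ) : ∫ x in -(R * δ)..R * δ, fejerKernel 1 x =
      ∫ x in Icc (-δ) δ, fejerKernel R x := by
    rw [integral_Icc_eq_integral_Ioc, ← intervalIntegral.integral_of_le (by linarith),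
      ← mul_neg, ← intervalIntegral.mul_integral_comp_mul_left,
      ← intervalIntegral.integral_const_mul]
    simp only [fejerKernel, one_mul, mul_one, mul_assoc]
  have htop : Tendsto (fun R => R * δ) atTop atTop := tendsto_id.atTop_mul_const hδ
  rw [← integral_fejerKernel one_pos]
  exact (intervalIntegral_tendsto_integral (integrable_fejerKernel one_ne_zero)
    (tendsto_neg_atTop_atBot.comp htop) htop).congr hscale

end FejerKernel

section LaplaceTransform

/-- The one-sided Laplace transform `∫₀^∞ e^{-st} g(t) dt`; it is `0` at each `s` for which the
integrand is not integrable. -/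
noncomputable def laplaceTransform (g : ℝ → ℂ) (s : ℂ) : ℂ :=
  ∫ t in Ioi (0 : ℝ), cexp (-s * t) * g t

variable {g φ : ℝ → ℂ} {G : ℂ → ℂ}

lemma fourier_mul_laplaceTransform {σ : ℝ} (hφ : Integrable φ)
    (hg : IntegrableOn (fun t : ℝ => cexp (-σ * t) * g t) (Ioi 0)) (T : ℝ) :
    𝓕 (fun u : ℝ => φ u * laplaceTransform g (σ - 2 * π * u * I)) T =
      laplaceTransform (fun t => g t * 𝓕 φ (T - t)) σ := by
  have hint : Integrable (Function.uncurry fun u t : ℝ =>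
      φ u * (cexp (-σ * t) * g t) * cexp ((-2 * π * u * (T - t) : ℝ) * I))
      (volume.prod (volume.restrict (Ioi 0))) :=
    (hφ.mul_prod hg).mul_bdd (c := 1) (Continuous.aestronglyMeasurable (by fun_prop))
      (ae_of_all _ fun p => (norm_exp_ofReal_mul_I _).le)
  calc 𝓕 (fun u : ℝ => φ u * laplaceTransform g (σ - 2 * π * u * I)) T
      = ∫ u : ℝ, ∫ t in Ioi (0 : ℝ),
          φ u * (cexp (-σ * t) * g t) * cexp ((-2 * π * u * (T - t) : ℝ) * I) := by
        rw [Real.fourier_real_eq_integral_exp_smul]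
        congr 1 with u
        rw [laplaceTransform, smul_eq_mul, ← integral_const_mul, ← integral_const_mul]
        congr 1 with t
        have hexp : cexp ((-2 * π * u * T : ℝ) * I) * cexp (-(σ - 2 * π * u * I) * t) =
            cexp (-σ * t) * cexp ((-2 * π * u * (T - t) : ℝ) * I) := by
          rw [← Complex.exp_add, ← Complex.exp_add]
          push_cast
          ring_nf
        linear_combination φ u * g t * hexp
    _ = ∫ t in Ioi (0 : ℝ), ∫ u : ℝ,
          φ u * (cexp (-σ * t) * g t) * cexp ((-2 * π * u * (T - t) : ℝ) * I) :=
        integral_integral_swap hint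
    _ = laplaceTransform (fun t => g t * 𝓕 φ (T - t)) σ := by
        rw [laplaceTransform]
        congr 1 with t
        rw [Real.fourier_real_eq_integral_exp_smul, ← integral_const_mul, ← integral_const_mul]
        congr 1 with u
        rw [smul_eq_mul]
        ring

lemma norm_exp_neg_mul_le_one {σ t : ℝ} (hσ : 0 ≤ σ) (ht : 0 ≤ t) : ‖cexp (-σ * t)‖ ≤ 1 := by
  rw [← ofReal_neg, ← ofReal_mul, norm_exp_ofReal, Real.exp_le_one_iff, neg_mul]
  exact neg_nonpos.mpr (mul_nonneg hσ ht)

lemma tendsto_laplaceTransform_zero (hg : IntegrableOn g (Ioi 0)) :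
    Tendsto (fun σ : ℝ => laplaceTransform g σ) (𝓝[>] 0) (𝓝 (∫ t in Ioi 0, g t)) := by
  refine tendsto_integral_filter_of_dominated_convergence (fun t => ‖g t‖) ?_ ?_ hg.norm ?_
  · exact .of_forall fun σ => (by fun_prop : Continuous fun t : ℝ => cexp (-σ * t))
      |>.aestronglyMeasurable.mul hg.aestronglyMeasurable
  · filter_upwards [self_mem_nhdsWithin] with σ hσ
    refine ae_restrict_of_forall_mem measurableSet_Ioi fun t ht => ?_
    rw [norm_mul]
    exact mul_le_of_le_one_left (norm_nonneg _)
      (norm_exp_neg_mul_le_one (mem_Ioi.mp hσ).le (mem_Ioi.mp ht).le)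
  · refine ae_of_all _ fun t => ?_
    have hcont : Continuous fun σ : ℝ => cexp (-σ * t) * g t := by fun_prop
    simpa using (hcont.tendsto 0).mono_left nhdsWithin_le_nhds

lemma tendsto_fourier_mul_boundary (hφ : Continuous φ) (hφc : HasCompactSupport φ)
    (hG : ContinuousOn G {s | 0 ≤ s.re}) (T : ℝ) :
    Tendsto (fun σ : ℝ => 𝓕 (fun u : ℝ => φ u * G (σ - 2 * π * u * I)) T) (𝓝[>] 0)
      (𝓝 (𝓕 (fun u : ℝ => φ u * G (-(2 * π * u * I))) T)) := by
  have hcont : ContinuousOn (fun σ : ℝ =>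
      ∫ u : ℝ, cexp ((-2 * π * u * T : ℝ) * I) • (φ u * G (σ - 2 * π * u * I))) (Ici 0) := by
    refine continuousOn_integral_of_compact_support hφc ?_ fun σ u _ hu => ?_
    · have hGc : ContinuousOn (fun p : ℝ × ℝ => G (p.1 - 2 * π * p.2 * I)) (Ici 0 ×ˢ univ) :=
        hG.comp (by fun_prop) fun p hp => by simpa using hp.1
      exact (by fun_prop : Continuous fun p : ℝ × ℝ => cexp ((-2 * π * p.2 * T : ℝ) * I))
        |>.continuousOn.smul ((hφ.comp continuous_snd).continuousOn.mul hGc)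
    · simp [image_eq_zero_of_notMem_tsupport hu]
  simp_rw [Real.fourier_real_eq_integral_exp_smul]
  simpa using (hcont 0 self_mem_Ici).mono_left (nhdsWithin_mono _ Ioi_subset_Ici_self)

lemma integrableOn_exp_mul {s : ℂ} {C : ℝ} (hs : 0 < s.re)
    (hgm : AEStronglyMeasurable g (volume.restrict (Ioi 0))) (hgC : ∀ t > 0, ‖g t‖ ≤ C) :
    IntegrableOn (fun t : ℝ => cexp (-s * t) * g t) (Ioi 0) :=
  (integrableOn_exp_mul_complex_Ioi (by simpa using hs) 0).mul_bdd hgm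
    (ae_restrict_of_forall_mem measurableSet_Ioi hgC)

theorem setIntegral_mul_fourier_eq {C : ℝ} (hφ : Continuous φ) (hφc : HasCompactSupport φ)
    (hφi : Integrable (𝓕 φ)) (hgm : AEStronglyMeasurable g (volume.restrict (Ioi 0)))
    (hgC : ∀ t > 0, ‖g t‖ ≤ C) (hG : ContinuousOn G {s | 0 ≤ s.re})
    (hgG : EqOn (laplaceTransform g) G {s | 0 < s.re}) (T : ℝ) :
    ∫ t in Ioi (0 : ℝ), g t * 𝓕 φ (T - t) = 𝓕 (fun u : ℝ => φ u * G (-(2 * π * u * I))) T := by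
  have hint : IntegrableOn (fun t => g t * 𝓕 φ (T - t)) (Ioi 0) :=
    (hφi.comp_sub_left T).integrableOn.bdd_mul hgm
      (ae_restrict_of_forall_mem measurableSet_Ioi hgC)
  refine tendsto_nhds_unique (tendsto_laplaceTransform_zero hint)
    ((tendsto_fourier_mul_boundary hφ hφc hG T).congr' ?_)
  filter_upwards [self_mem_nhdsWithin] with σ hσ
  have hline : (fun u : ℝ => φ u * G (σ - 2 * π * u * I)) =
      fun u : ℝ => φ u * laplaceTransform g (σ - 2 * π * u * I) :=
    funext fun u => by rw [hgG (by simpa using hσ)]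
  rw [hline, fourier_mul_laplaceTransform (hφ.integrable_of_hasCompactSupport hφc)
    (integrableOn_exp_mul (by simpa using hσ) hgm hgC)]

theorem tendsto_setIntegral_mul_fourier {C : ℝ} (hφ : Continuous φ) (hφc : HasCompactSupport φ)
    (hφi : Integrable (𝓕 φ)) (hgm : AEStronglyMeasurable g (volume.restrict (Ioi 0)))
    (hgC : ∀ t > 0, ‖g t‖ ≤ C) (hG : ContinuousOn G {s | 0 ≤ s.re})
    (hgG : EqOn (laplaceTransform g) G {s | 0 < s.re}) :
    Tendsto (fun T => ∫ t in Ioi (0 : ℝ), g t * 𝓕 φ (T - t)) (cocompact ℝ) (𝓝 0) := by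
  simp_rw [setIntegral_mul_fourier_eq hφ hφc hφi hgm hgC hG hgG]
  exact Real.zero_at_infty_fourier _

end LaplaceTransform

section FejerMean

lemma tendsto_setIntegral_Ioi_comp_sub_left {E : Type*} [NormedAddCommGroup E] [NormedSpace ℝ E]
    {K : ℝ → E} (hK : Integrable K) :
    Tendsto (fun T => ∫ t in Ioi 0, K (T - t)) atTop (𝓝 (∫ x, K x)) := by
  have hrefl (T : ℝ) : ∫ t in Ioi 0, K (T - t) = ∫ x in Iio T, K x := by
    rw [← (Measure.measurePreserving_sub_left volume T).setIntegral_preimage_emb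
      (measurableEmbedding_subLeft T) K (Iio T), preimage_const_sub_Iio, sub_self]
  simp_rw [hrefl]
  exact (aecover_Iio tendsto_id).integral_tendsto_of_countably_generated hK

lemma laplaceTransform_sub_const {g : ℝ → ℂ} {s : ℂ} (A : ℂ) (hs : 0 < s.re)
    (hg : IntegrableOn (fun t : ℝ => cexp (-s * t) * g t) (Ioi 0)) :
    laplaceTransform (fun t => g t - A) s = laplaceTransform g s - A / s := by
  have hre : (-s).re < 0 := by simpa using hs
  simp only [laplaceTransform, mul_sub]
  rw [integral_sub hg ((integrableOn_exp_mul_complex_Ioi hre 0).mul_const A), integral_mul_const,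
    integral_exp_mul_complex_Ioi hre]
  simp [div_eq_inv_mul]

theorem tendsto_setIntegral_mul_fejerKernel {g : ℝ → ℂ} {G : ℂ → ℂ} {A : ℂ} {C R : ℝ}
    (hgm : AEStronglyMeasurable g (volume.restrict (Ioi 0))) (hgC : ∀ t > 0, ‖g t‖ ≤ C)
    (hG : ContinuousOn G {s | 0 ≤ s.re})
    (hgG : EqOn (fun s => laplaceTransform g s - A / s) G {s | 0 < s.re}) (hR : 0 < R) :
    Tendsto (fun T => ∫ t in Ioi 0, g t * fejerKernel R (T - t)) atTop (𝓝 A) := by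
  have hK : Integrable fun x => (fejerKernel R x : ℂ) := (integrable_fejerKernel hR.ne').ofReal
  have hzero : Tendsto (fun T => ∫ t in Ioi 0, (g t - A) * fejerKernel R (T - t))
      atTop (𝓝 0) := by
    have h := tendsto_setIntegral_mul_fourier (g := fun t => g t - A)
      (continuous_ofReal.comp (continuous_triangle R))
      ((hasCompactSupport_triangle hR).comp_left ofReal_zero)
      (by rwa [Function.comp_def, fourier_triangle hR]) (hgm.sub aestronglyMeasurable_const)
      (fun t ht => norm_sub_le_of_le (hgC t ht) le_rfl) hG
      fun s hs => (laplaceTransform_sub_const A hs (integrableOn_exp_mul hs hgm hgC)).trans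
        (hgG hs)
    simp only [Function.comp_def, fourier_triangle hR] at h
    exact h.mono_left atTop_le_cocompact
  have hconst := (tendsto_setIntegral_Ioi_comp_sub_left hK).const_mul A
  rw [integral_complex_ofReal, integral_fejerKernel hR, ofReal_one, mul_one] at hconst
  refine (zero_add A ▸ hzero.add hconst).congr fun T => ?_
  have hKT := (hK.comp_sub_left T).integrableOn (s := Ioi 0)
  have hgK : IntegrableOn (fun t => g t * fejerKernel R (T - t)) (Ioi 0) :=
    hKT.bdd_mul hgm (ae_restrict_of_forall_mem measurableSet_Ioi hgC)
  simp only [sub_mul]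
  rw [integral_sub hgK (hKT.const_mul A), integral_const_mul, sub_add_cancel]

end FejerMean

section Tauberian

variable {f K : ℝ → ℝ} {A C δ T : ℝ}

lemma le_mul_exp_of_monotoneOn_exp_mul (hf : MonotoneOn (fun t => rexp t * f t) (Ioi 0))
    {s t : ℝ} (hs : 0 < s) (hst : s ≤ t) : f s ≤ f t * rexp (t - s) := by
  have h : rexp s * f s ≤ rexp t * f t := hf hs (hs.trans_le hst) hst
  rw [Real.exp_sub, ← mul_div_assoc, le_div_iff₀ (Real.exp_pos s)]
  linarith

lemma aestronglyMeasurable_of_monotoneOn_exp_mul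
    (hf : MonotoneOn (fun t => rexp t * f t) (Ioi 0)) :
    AEStronglyMeasurable f (volume.restrict (Ioi 0)) := by
  have h := (Real.measurable_exp.comp measurable_neg).aemeasurable.mul
    (aemeasurable_restrict_of_monotoneOn (μ := volume) measurableSet_Ioi hf)
  refine (h.congr (ae_of_all _ fun t => ?_)).aestronglyMeasurable
  simp [← mul_assoc, ← Real.exp_add]

lemma integrableOn_mul_comp_sub_left (hf : MonotoneOn (fun t => rexp t * f t) (Ioi 0))
    (hf0 : ∀ t > 0, 0 ≤ f t) (hfC : ∀ t > 0, f t ≤ C) (hK : Integrable K) (T : ℝ) :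
    IntegrableOn (fun t => f t * K (T - t)) (Ioi 0) :=
  (hK.comp_sub_left T).integrableOn.bdd_mul (aestronglyMeasurable_of_monotoneOn_exp_mul hf)
    (ae_restrict_of_forall_mem measurableSet_Ioi fun t ht =>
      (Real.norm_of_nonneg (hf0 t ht)).trans_le (hfC t ht))

lemma mul_setIntegral_Icc_le_setIntegral (hf : MonotoneOn (fun t => rexp t * f t) (Ioi 0))
    (hf0 : ∀ t > 0, 0 ≤ f t) (hfC : ∀ t > 0, f t ≤ C) (hK : Integrable K) (hK0 : ∀ x, 0 ≤ K x)
    (hT : 0 < T) :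
    f T * rexp (-(2 * δ)) * ∫ x in Icc (-δ) δ, K x ≤ ∫ t in Ioi 0, f t * K (T + δ - t) := by
  have hsub : Icc T (T + 2 * δ) ⊆ Ioi 0 := fun t ht => hT.trans_le ht.1
  have hint := integrableOn_mul_comp_sub_left hf hf0 hfC hK (T + δ)
  have hrefl : ∫ x in Icc (-δ) δ, K x = ∫ t in Icc T (T + 2 * δ), K (T + δ - t) := by
    rw [← (Measure.measurePreserving_sub_left volume (T + δ)).setIntegral_preimage_emb
      (measurableEmbedding_subLeft (T + δ)) K (Icc (-δ) δ), preimage_const_sub_Icc]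
    ring_nf
  rw [hrefl, ← integral_const_mul]
  calc ∫ t in Icc T (T + 2 * δ), f T * rexp (-(2 * δ)) * K (T + δ - t)
      ≤ ∫ t in Icc T (T + 2 * δ), f t * K (T + δ - t) := by
        refine setIntegral_mono_on ((hK.comp_sub_left _).const_mul _).integrableOn
          (hint.mono_set hsub) measurableSet_Icc fun t ht => ?_
        gcongr
        · exact hK0 _
        · rw [Real.exp_neg, ← div_eq_mul_inv, div_le_iff₀ (Real.exp_pos _)]
          refine (le_mul_exp_of_monotoneOn_exp_mul hf hT ht.1).trans ?_
          gcongr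
          · exact hf0 t (hsub ht)
          · linarith [ht.2]
    _ ≤ ∫ t in Ioi 0, f t * K (T + δ - t) :=
        setIntegral_mono_set hint (ae_restrict_of_forall_mem measurableSet_Ioi fun t ht =>
          mul_nonneg (hf0 t ht) (hK0 _)) hsub.eventuallyLE

lemma setIntegral_le_mul_integral_add (hf : MonotoneOn (fun t => rexp t * f t) (Ioi 0))
    (hf0 : ∀ t > 0, 0 ≤ f t) (hfC : ∀ t > 0, f t ≤ C) (hK : Integrable K) (hK0 : ∀ x, 0 ≤ K x)
    (hT : 0 < T) :
    ∫ t in Ioi 0, f t * K (T - δ - t) ≤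
      f T * rexp (2 * δ) * (∫ x, K x) + C * ∫ x in (Icc (-δ) δ)ᶜ, K x := by
  let Kout := (Icc (-δ) δ)ᶜ.indicator K
  let B : ℝ → ℝ := fun x => f T * rexp (2 * δ) * K x + C * Kout x
  have hKout : Integrable Kout := hK.indicator measurableSet_Icc.compl
  have hB : Integrable B := (hK.const_mul _).add (hKout.const_mul C)
  have hmain0 (x : ℝ) : 0 ≤ f T * rexp (2 * δ) * K x :=
    mul_nonneg (mul_nonneg (hf0 T hT) (Real.exp_pos _).le) (hK0 x)
  have hout0 (x : ℝ) : 0 ≤ C * Kout x :=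
    mul_nonneg ((hf0 T hT).trans (hfC T hT)) (indicator_nonneg (fun x _ => hK0 x) x)
  have hfB (t : ℝ) (ht : t ∈ Ioi 0) : f t * K (T - δ - t) ≤ B (T - δ - t) := by
    by_cases hx : T - δ - t ∈ Icc (-δ) δ
    · refine le_add_of_le_of_nonneg (mul_le_mul_of_nonneg_right ?_ (hK0 _)) (hout0 _)
      refine (le_mul_exp_of_monotoneOn_exp_mul hf ht (t := T) (by linarith [hx.1])).trans ?_
      gcongr
      · exact hf0 T hT
      · linarith [hx.2]
    · refine le_add_of_nonneg_of_le (hmain0 _) ?_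
      simp only [Kout, indicator_of_mem (mem_compl hx)]
      exact mul_le_mul_of_nonneg_right (hfC t ht) (hK0 _)
  calc ∫ t in Ioi 0, f t * K (T - δ - t)
      ≤ ∫ t in Ioi 0, B (T - δ - t) :=
        setIntegral_mono_on (integrableOn_mul_comp_sub_left hf hf0 hfC hK _)
          (hB.comp_sub_left _).integrableOn measurableSet_Ioi hfB
    _ ≤ ∫ t, B (T - δ - t) :=
        setIntegral_le_integral (hB.comp_sub_left _)
          (ae_of_all _ fun t => add_nonneg (hmain0 _) (hout0 _))
    _ = f T * rexp (2 * δ) * (∫ x, K x) + C * ∫ x in (Icc (-δ) δ)ᶜ, K x := by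
        rw [integral_sub_left_eq_self B volume, integral_add (hK.const_mul _)
          (hKout.const_mul C), integral_const_mul, integral_const_mul,
          integral_indicator measurableSet_Icc.compl]

lemma exists_pos_mul_exp_lt {k b : ℝ} (hkb : k < b) : ∃ δ > 0, k * rexp (2 * δ) < b := by
  have hcont : Continuous fun δ : ℝ => k * rexp (2 * δ) := by fun_prop
  have hlim : Tendsto (fun δ : ℝ => k * rexp (2 * δ)) (𝓝[>] 0) (𝓝 k) := by
    simpa using (hcont.tendsto 0).mono_left nhdsWithin_le_nhds
  obtain ⟨δ, hlt, hδ⟩ := ((hlim.eventually_lt_const hkb).and self_mem_nhdsWithin).exists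
  exact ⟨δ, hδ, hlt⟩

section ApproximateIdentity

variable {ι : Type*} {l : Filter ι} [l.NeBot] {κ : ι → ℝ → ℝ}

lemma eventually_lt_of_tendsto_setIntegral (hf : MonotoneOn (fun t => rexp t * f t) (Ioi 0))
    (hf0 : ∀ t > 0, 0 ≤ f t) (hfC : ∀ t > 0, f t ≤ C) (hκi : ∀ᶠ i in l, Integrable (κ i))
    (hκ0 : ∀ᶠ i in l, ∀ x, 0 ≤ κ i x)
    (hκ : ∀ δ > 0, Tendsto (fun i => ∫ x in Icc (-δ) δ, κ i x) l (𝓝 1))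
    (hmean : ∀ᶠ i in l, Tendsto (fun T => ∫ t in Ioi 0, f t * κ i (T - t)) atTop (𝓝 A))
    {b : ℝ} (hb : A < b) : ∀ᶠ T in atTop, f T < b := by
  obtain ⟨δ, hδ, hAb⟩ := exists_pos_mul_exp_lt hb
  have hlim : Tendsto (fun i => b * rexp (-(2 * δ)) * ∫ x in Icc (-δ) δ, κ i x) l
      (𝓝 (b * rexp (-(2 * δ)))) := by
    simpa using (hκ δ hδ).const_mul (b * rexp (-(2 * δ)))
  have hA : A < b * rexp (-(2 * δ)) := by
    rwa [Real.exp_neg, ← div_eq_mul_inv, lt_div_iff₀ (Real.exp_pos _)]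
  obtain ⟨i, hAi, hmass, hi, hi0, hmeani⟩ := ((hlim.eventually_const_lt hA).and
    (((hκ δ hδ).eventually_const_lt one_pos).and (hκi.and (hκ0.and hmean)))).exists
  filter_upwards [eventually_gt_atTop 0, (hmeani.comp
    (tendsto_atTop_add_const_right _ δ tendsto_id)).eventually_lt_const hAi] with T hT hlt
  have h := (mul_setIntegral_Icc_le_setIntegral hf hf0 hfC hi hi0 hT).trans_lt hlt
  exact lt_of_mul_lt_mul_right (lt_of_mul_lt_mul_right h hmass.le) (Real.exp_pos _).le

lemma eventually_gt_of_tendsto_setIntegral (hf : MonotoneOn (fun t => rexp t * f t) (Ioi 0))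
    (hf0 : ∀ t > 0, 0 ≤ f t) (hfC : ∀ t > 0, f t ≤ C) (hκi : ∀ᶠ i in l, Integrable (κ i))
    (hκ0 : ∀ᶠ i in l, ∀ x, 0 ≤ κ i x) (hκ1 : ∀ᶠ i in l, ∫ x, κ i x = 1)
    (hκ : ∀ δ > 0, Tendsto (fun i => ∫ x in Icc (-δ) δ, κ i x) l (𝓝 1))
    (hmean : ∀ᶠ i in l, Tendsto (fun T => ∫ t in Ioi 0, f t * κ i (T - t)) atTop (𝓝 A))
    {a : ℝ} (ha : a < A) : ∀ᶠ T in atTop, a < f T := by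
  obtain ⟨δ, hδ, haA⟩ := exists_pos_mul_exp_lt ha
  have hlim : Tendsto (fun i => a * rexp (2 * δ) + C * (1 - ∫ x in Icc (-δ) δ, κ i x)) l
      (𝓝 (a * rexp (2 * δ))) := by
    simpa using (((hκ δ hδ).const_sub 1).const_mul C).const_add (a * rexp (2 * δ))
  obtain ⟨i, hAi, hi, hi0, hi1, hmeani⟩ := ((hlim.eventually_lt_const haA).and
    (hκi.and (hκ0.and (hκ1.and hmean)))).exists
  filter_upwards [eventually_gt_atTop 0, (hmeani.comp
    (tendsto_atTop_add_const_right _ (-δ) tendsto_id)).eventually_const_lt hAi] with T hT hlt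
  have h := hlt.trans_le (setIntegral_le_mul_integral_add hf hf0 hfC hi hi0 hT)
  rw [setIntegral_compl measurableSet_Icc hi, hi1, mul_one] at h
  exact lt_of_mul_lt_mul_right (lt_of_add_lt_add_right h) (Real.exp_pos _).le

end ApproximateIdentity

theorem tendsto_of_laplaceTransform_sub_div_eqOn {G : ℂ → ℂ}
    (hf : MonotoneOn (fun t => rexp t * f t) (Ioi 0)) (hf0 : ∀ t > 0, 0 ≤ f t)
    (hfC : ∀ t > 0, f t ≤ C) (hG : ContinuousOn G {s | 0 ≤ s.re})
    (hfG : EqOn (fun s => laplaceTransform (fun t => f t) s - A / s) G {s | 0 < s.re}) :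
    Tendsto f atTop (𝓝 A) := by
  have hpos : ∀ᶠ R : ℝ in atTop, 0 < R := eventually_gt_atTop 0
  have hKi := hpos.mono fun R hR => integrable_fejerKernel hR.ne'
  have hK0 := hpos.mono fun R hR => fejerKernel_nonneg hR.le
  have hK (δ : ℝ) (hδ : δ > 0) := tendsto_setIntegral_Icc_fejerKernel hδ
  have hmean : ∀ᶠ R : ℝ in atTop,
      Tendsto (fun T => ∫ t in Ioi 0, f t * fejerKernel R (T - t)) atTop (𝓝 A) := by
    filter_upwards [hpos] with R hR
    have h := tendsto_setIntegral_mul_fejerKernel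
      (continuous_ofReal.comp_aestronglyMeasurable (aestronglyMeasurable_of_monotoneOn_exp_mul hf))
      (fun t ht => by simpa [abs_of_nonneg (hf0 t ht)] using hfC t ht) hG hfG hR
    simp only [← ofReal_mul, integral_complex_ofReal] at h
    exact tendsto_ofReal_iff.mp h
  rw [tendsto_order]
  exact ⟨fun a ha => eventually_gt_of_tendsto_setIntegral hf hf0 hfC hKi hK0
      (hpos.mono fun R hR => integral_fejerKernel hR) hK hmean ha,
    fun b hb => eventually_lt_of_tendsto_setIntegral hf hf0 hfC hKi hK0 hK hmean hb⟩

end Tauberian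

section DirichletSeries

/-- The partial sum of `a` up to `e^t`, divided by `e^t`. -/
noncomputable def expMean (a : ℕ → ℝ) (t : ℝ) : ℝ :=
  rexp (-t) * ∑ k ∈ Finset.Icc 1 ⌊rexp t⌋₊, a k

variable {a : ℕ → ℝ}

lemma exp_mul_expMean (a : ℕ → ℝ) (t : ℝ) :
    rexp t * expMean a t = ∑ k ∈ Finset.Icc 1 ⌊rexp t⌋₊, a k := by
  rw [expMean, ← mul_assoc, ← Real.exp_add, add_neg_cancel, Real.exp_zero, one_mul]

lemma expMean_log {x : ℝ} (hx : 0 < x) :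
    expMean a (Real.log x) = (∑ k ∈ Finset.Icc 1 ⌊x⌋₊, a k) / x := by
  rw [expMean, Real.exp_neg, Real.exp_log hx, inv_mul_eq_div]

lemma expMean_nonneg (ha : ∀ n, 0 ≤ a n) (t : ℝ) : 0 ≤ expMean a t :=
  mul_nonneg (Real.exp_pos _).le (Finset.sum_nonneg fun k _ => ha k)

lemma monotone_exp_mul_expMean (ha : ∀ n, 0 ≤ a n) : Monotone fun t => rexp t * expMean a t := by
  simp only [exp_mul_expMean]
  exact fun s t hst => Finset.sum_le_sum_of_subset_of_nonneg
    (Finset.Icc_subset_Icc_right (Nat.floor_mono (Real.exp_monotone hst))) fun k _ _ => ha k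

lemma exists_expMean_le
    (hO : (fun n => ∑ k ∈ Finset.Icc 1 n, a k) =O[atTop] fun n => (n : ℝ)) :
    ∃ C, ∀ t, expMean a t ≤ C := by
  obtain ⟨C, hC⟩ := (isBigO_nat_atTop_iff fun n hn => by simp [Nat.cast_eq_zero.mp hn]).mp hO
  have hC0 : 0 ≤ C := (abs_nonneg (a 1)).trans (by simpa using hC 1)
  refine ⟨C, fun t => le_of_mul_le_mul_left ?_ (Real.exp_pos t)⟩
  calc rexp t * expMean a t ≤ C * ‖(⌊rexp t⌋₊ : ℝ)‖ := by
        rw [exp_mul_expMean]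
        exact (le_abs_self _).trans (hC _)
    _ ≤ C * rexp t := by
        rw [Real.norm_natCast]
        gcongr
        exact Nat.floor_le (Real.exp_pos t).le
    _ = rexp t * C := mul_comm _ _

lemma laplaceTransform_expMean {s : ℂ} (ha : ∀ n, 0 ≤ a n)
    (hO : (fun n => ∑ k ∈ Finset.Icc 1 n, a k) =O[atTop] fun n => (n : ℝ)) (hs : 0 < s.re) :
    laplaceTransform (fun t => expMean a t) s = LSeries (fun n => a n) (s + 1) / (s + 1) := by
  have hs1 : s + 1 ≠ 0 := ne_zero_of_re_pos (by simpa using add_pos hs one_pos)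
  rw [LSeries_eq_mul_integral_of_nonneg a zero_le_one (by simpa using hs) (by simpa using hO) ha,
    mul_div_cancel_left₀ _ hs1, ← Real.exp_zero, ← integral_comp_exp_Ioi, laplaceTransform]
  congr 1 with t
  have hexp : cexp (-s * t) * cexp (-t) = cexp t * cexp (t * -(s + 1 + 1)) := by
    rw [← Complex.exp_add, ← Complex.exp_add]
    ring_nf
  rw [expMean, cpow_def_of_ne_zero (ofReal_ne_zero.mpr (Real.exp_pos t).ne'),
    ← ofReal_log (Real.exp_pos t).le, Real.log_exp, real_smul]
  push_cast
  linear_combination (∑ k ∈ Finset.Icc 1 ⌊rexp t⌋₊, (a k : ℂ)) * hexp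

theorem tendsto_sum_div_of_LSeries_sub_div_eqOn {G : ℂ → ℂ} {A : ℝ} (ha : ∀ n, 0 ≤ a n)
    (hO : (fun n => ∑ k ∈ Finset.Icc 1 n, a k) =O[atTop] fun n => (n : ℝ))
    (hG : ContinuousOn G {s | 1 ≤ s.re})
    (haG : EqOn G (fun s => LSeries (fun n => a n) s - A / (s - 1)) {s | 1 < s.re}) :
    Tendsto (fun x : ℝ => (∑ k ∈ Finset.Icc 1 ⌊x⌋₊, a k) / x) atTop (𝓝 A) := by
  obtain ⟨C, hC⟩ := exists_expMean_le hO
  have hcont : ContinuousOn (fun s => (G (s + 1) - A) / (s + 1)) {s | 0 ≤ s.re} := by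
    refine ((hG.comp (by fun_prop) fun s hs => by simpa using hs).sub continuousOn_const).div
      (by fun_prop) fun s hs => ?_
    exact ne_zero_of_re_pos (by simpa using add_pos_of_nonneg_of_pos hs one_pos)
  have heq : EqOn (fun s => laplaceTransform (fun t => expMean a t) s - A / s)
      (fun s => (G (s + 1) - A) / (s + 1)) {s | 0 < s.re} := by
    intro s (hs : 0 < s.re)
    have hs0 : s ≠ 0 := ne_zero_of_re_pos hs
    have hs1 : s + 1 ≠ 0 := ne_zero_of_re_pos (by simpa using add_pos hs one_pos)
    simp only [laplaceTransform_expMean ha hO hs, haG (show s + 1 ∈ _ by simpa using hs),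
      add_sub_cancel_right]
    field_simp
    ring
  have hlim : Tendsto (expMean a) atTop (𝓝 A) :=
    tendsto_of_laplaceTransform_sub_div_eqOn ((monotone_exp_mul_expMean ha).monotoneOn _)
      (fun t _ => expMean_nonneg ha t) (fun t _ => hC t) hcont heq
  refine (hlim.comp Real.tendsto_log_atTop).congr' ?_
  filter_upwards [eventually_gt_atTop 0] with x hx using expMean_log hx

end DirichletSeries

section PrimeNumberTheorem

open ArithmeticFunction.vonMangoldt

lemma isBigO_sum_residueClass {q : ℕ} (a : ZMod q) :
    (fun n => ∑ k ∈ Finset.Icc 1 n, residueClass a k) =O[atTop] fun n => (n : ℝ) := by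
  refine .of_bound (Real.log 4 + 4) (.of_forall fun n => ?_)
  rw [Real.norm_of_nonneg (Finset.sum_nonneg fun k _ => residueClass_nonneg a k),
    Real.norm_natCast]
  calc ∑ k ∈ Finset.Icc 1 n, residueClass a k
      ≤ ∑ k ∈ Finset.Icc 1 n, ArithmeticFunction.vonMangoldt k :=
        Finset.sum_le_sum fun k _ => residueClass_le a k
    _ = Chebyshev.psi n := by rw [Chebyshev.psi, Nat.floor_natCast]; rfl
    _ ≤ (Real.log 4 + 4) * n := Chebyshev.psi_le_const_mul_self n.cast_nonneg

theorem tendsto_sum_residueClass_div {q : ℕ} [NeZero q] {a : ZMod q} (ha : IsUnit a) :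
    Tendsto (fun x : ℝ => (∑ k ∈ Finset.Icc 1 ⌊x⌋₊, residueClass a k) / x) atTop
      (𝓝 (q.totient : ℝ)⁻¹) :=
  tendsto_sum_div_of_LSeries_sub_div_eqOn (residueClass_nonneg a) (isBigO_sum_residueClass a)
    (continuousOn_LFunctionResidueClassAux a)
    (by simpa using eqOn_LFunctionResidueClassAux ha)

theorem isEquivalent_psi : Chebyshev.psi ~[atTop] fun x => x := by
  have hΛ : residueClass (1 : ZMod 1) = ArithmeticFunction.vonMangoldt := by
    ext n
    simp [residueClass, Set.indicator, Subsingleton.elim _ (1 : ZMod 1)]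
  have h := tendsto_sum_residueClass_div (isUnit_one : IsUnit (1 : ZMod 1))
  rw [isEquivalent_iff_tendsto_one (eventually_ne_atTop 0)]
  simpa [hΛ, Pi.div_def, Chebyshev.psi, ← Finset.Icc_add_one_left_eq_Ioc] using h

theorem isEquivalent_theta : Chebyshev.theta ~[atTop] fun x => x := by
  have hinv : (fun x => (√x)⁻¹) =o[atTop] fun _ => (1 : ℝ) :=
    (isLittleO_one_iff ℝ).mpr Real.tendsto_sqrt_atTop.inv_tendsto_atTop
  have hsqrt : (fun x => √x) =o[atTop] fun x => x := by
    simpa [← div_eq_mul_inv] using (isBigO_refl (fun x : ℝ => x) atTop).mul_isLittleO hinv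
  have h := Chebyshev.isBigO_psi_sub_theta_sqrt.trans_isLittleO hsqrt
  simpa using isEquivalent_psi.sub_isLittleO h

theorem isEquivalent_primeCounting_div_log :
    (fun x : ℝ => (Nat.primeCounting ⌊x⌋₊ : ℝ)) ~[atTop] fun x => x / Real.log x := by
  have hinv : (fun x => (Real.log x)⁻¹) =o[atTop] fun _ => (1 : ℝ) :=
    (isLittleO_one_iff ℝ).mpr Real.tendsto_log_atTop.inv_tendsto_atTop
  have hlog : (fun x => x / Real.log x ^ 2) =o[atTop] fun x => x / Real.log x := by
    simpa [← div_eq_mul_inv, div_div, ← sq] using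
      (isBigO_refl (fun x => x / Real.log x) atTop).mul_isLittleO hinv
  have htheta : (fun x => Chebyshev.theta x / Real.log x) ~[atTop] fun x => x / Real.log x :=
    isEquivalent_theta.div .refl
  simpa [Pi.add_def] using htheta.add_isLittleO
    (Chebyshev.primeCounting_sub_theta_div_log_isBigO.trans_isLittleO hlog)

end PrimeNumberTheorem

end WienerIkehara

theorem primeCounting_asymptotic :
    Tendsto (fun n : ℕ => (Nat.primeCounting n : ℝ) * Real.log n / n)
      atTop (𝓝 1) := by
  have h := WienerIkehara.isEquivalent_primeCounting_div_log.comp_tendsto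
    tendsto_natCast_atTop_atTop
  have hne : ∀ᶠ n : ℕ in atTop, (n / Real.log n : ℝ) ≠ 0 := by
    filter_upwards [eventually_gt_atTop 1] with n hn
    have := Real.log_pos (Nat.one_lt_cast.mpr hn)
    positivity
  refine ((Asymptotics.isEquivalent_iff_tendsto_one hne).mp h).congr fun n => ?_
  simp [div_div_eq_mul_div]
end

section
/- Let p(n) denote the n-th prime number. Then the limit as n → ∞ of p(n) / (n · (log n + log log n − 1)) equals 1; that is, p(n) ~ n(log n + log log n − 1). -/
open Filter Topology

/-- `p n` is the `n`-th prime number, so `p 1 = 2`, `p 2 = 3`, … -/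
noncomputable def p (n : ℕ) : ℕ := Nat.nth Nat.Prime (n - 1)

/-!
Since `-ζ'/ζ(s) - 1/(s - 1)` extends continuously to `Re s ≥ 1`, the Laplace transform of
`e⁻ᵘ ψ(eᵘ) - 1` extends continuously to `Re s ≥ 0`. Testing against a translated kernel whose
Fourier transform has compact support, the Riemann–Lebesgue lemma shows that the smoothed averages
of `e⁻ᵘ ψ(eᵘ)` tend to `1`; as `ψ` is monotone, so does the function itself (the Wiener–Ikehara
argument). Thus `ψ(x) ~ x`, hence `π(x) ~ x / log x`. At `x = p n` this reads
`n ~ p n / log (p n)`, which inverts to `p n ~ n log n`, and `log n + log log n - 1 ~ log n`.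
-/

section FourierMethod

open MeasureTheory Real FourierTransform RealInnerProductSpace Convolution ComplexConjugate
open SchwartzMap

lemma conj_fourier (f : ℝ → ℂ) (v : ℝ) :
    conj (𝓕 f v) = 𝓕 (fun t ↦ conj (f (-t))) v := by
  simp only [Real.fourier_real_eq, Circle.smul_def, smul_eq_mul]
  rw [← integral_conj, ← integral_neg_eq_self]
  simp [← Circle.coe_inv_eq_conj, ← AddChar.map_neg_eq_inv]

lemma fourier_autocorrelation {f : ℝ → ℂ} (hf : Integrable f) (v : ℝ) :
    𝓕 (f ⋆[ContinuousLinearMap.mul ℂ ℂ] fun t ↦ conj (f (-t))) v = ((‖𝓕 f v‖ ^ 2 : ℝ) : ℂ) := by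
  have hf' : Integrable fun t ↦ conj (f (-t)) :=
    (LinearIsometryEquiv.integrable_comp_iff Complex.conjLIE).mpr hf.comp_neg
  rw [Real.fourier_mul_convolution_eq hf hf', ← conj_fourier, Complex.mul_conj']
  norm_cast

lemma fourier_comp_div (f : ℝ → ℂ) {b : ℝ} (hb : 0 < b) (v : ℝ) :
    𝓕 (fun t ↦ f (t / b)) v = b * 𝓕 f (b * v) := by
  simp only [Real.fourier_real_eq]
  rw [← Complex.real_smul, ← abs_of_pos hb, ← Measure.integral_comp_div, abs_of_pos hb]
  refine integral_congr_ae (.of_forall fun t ↦ ?_)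
  simp only [show t / b * (b * v) = t * v by field_simp]

lemma fourier_fourierChar_smul (w : ℝ → ℂ) (y u : ℝ) :
    𝓕 (fun t ↦ Real.fourierChar (y * t) • w t) u = 𝓕 w (u - y) := by
  simp only [Real.fourier_real_eq, smul_smul, ← AddChar.map_add_eq_mul]
  congr! 4
  ring

lemma integral_fourier_sub_mul {w g : ℝ → ℂ} (hw : Integrable w) (hg : Integrable g) (y : ℝ) :
    ∫ u, 𝓕 w (u - y) * g u = 𝓕⁻ (fun t ↦ w t * 𝓕 g t) y := by
  have hwy : Integrable fun t ↦ Real.fourierChar (y * t) • w t := by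
    have := (Real.fourierIntegral_convergent_iff (μ := volume) (f := w) (-y)).mpr hw
    simpa using! this
  have key := VectorFourier.integral_fourierIntegral_smul_eq_flip (L := innerₗ ℝ)
    Real.continuous_fourierChar continuous_inner hwy hg
  calc ∫ u, 𝓕 w (u - y) * g u
      = ∫ u, 𝓕 (fun t ↦ Real.fourierChar (y * t) • w t) u • g u := by
        simp only [fourier_fourierChar_smul, smul_eq_mul]
    _ = ∫ t, (Real.fourierChar (y * t) • w t) • 𝓕 g t := by simpa using! key
    _ = 𝓕⁻ (fun t ↦ w t * 𝓕 g t) y := by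
        simp [Real.fourierInv_eq, smul_mul_assoc]

/-- A Fejér-type kernel: a probability density on `ℝ` whose Fourier side has compact support. The
condition is encoded by exhibiting the density as the Fourier transform of `w`. Averages against
such a kernel involve a Laplace transform only on a bounded piece of the boundary line. -/
structure IsBandlimitedKernel (K : ℝ → ℝ) : Prop where
  nonneg : ∀ v, 0 ≤ K v
  integrable : Integrable K
  integral_eq_one : ∫ v, K v = 1
  exists_fourier_eq : ∃ w : ℝ → ℂ, Continuous w ∧ HasCompactSupport w ∧ ∀ v, 𝓕 w v = K v

theorem isBandlimitedKernel_norm_fourier_sq {φ : 𝓢(ℝ, ℂ)} (hφ : HasCompactSupport φ)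
    (hφ_norm : ∫ t, ‖φ t‖ ^ 2 = 1) : IsBandlimitedKernel fun v ↦ ‖𝓕 φ v‖ ^ 2 := by
  have hconj : HasCompactSupport fun t ↦ conj (φ (-t)) :=
    (hφ.comp_homeomorph (Homeomorph.neg ℝ)).comp_left (map_zero conj)
  refine ⟨fun v ↦ by positivity, ((𝓕 φ).memLp 2).integrable_norm_pow two_ne_zero,
    (φ.integral_norm_sq_fourier).trans hφ_norm,
    φ ⋆[ContinuousLinearMap.mul ℂ ℂ] fun t ↦ conj (φ (-t)), ?_, hφ.convolution _ hconj,
    fun v ↦ ?_⟩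
  · exact hconj.continuous_convolution_right _ φ.integrable.locallyIntegrable (by fun_prop)
  · rw [fourier_autocorrelation φ.integrable, SchwartzMap.fourier_coe]

theorem exists_isBandlimitedKernel : ∃ K, IsBandlimitedKernel K := by
  obtain ⟨b⟩ : Nonempty (ContDiffBump (0 : ℝ)) := inferInstance
  have hb : HasCompactSupport fun t ↦ (b t : ℂ) :=
    b.hasCompactSupport.comp_left Complex.ofReal_zero
  have hb_sq : 0 < ∫ t, b t ^ 2 := by
    refine (b.continuous.pow 2).integral_pos_of_hasCompactSupport_nonneg_nonzero (x := 0)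
      (b.hasCompactSupport.comp_left (zero_pow two_ne_zero)) (fun t ↦ sq_nonneg _) ?_
    simp [b.one_of_mem_closedBall (Metric.mem_closedBall_self b.rIn_pos.le)]
  let c : ℝ := (√(∫ t, b t ^ 2))⁻¹
  let φ : 𝓢(ℝ, ℂ) := c • hb.toSchwartzMap (Complex.ofRealCLM.contDiff.comp b.contDiff)
  have hφ (t : ℝ) : φ t = c * b t := rfl
  refine ⟨_, isBandlimitedKernel_norm_fourier_sq (φ := φ) (hb.smul_left (f := fun _ ↦ c)) ?_⟩
  simp only [hφ, norm_mul, mul_pow, Complex.norm_real, Real.norm_eq_abs, sq_abs]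
  rw [integral_const_mul, inv_pow, Real.sq_sqrt hb_sq.le, inv_mul_cancel₀ hb_sq.ne']

namespace IsBandlimitedKernel

variable {K : ℝ → ℝ}

theorem scale (hK : IsBandlimitedKernel K) {b : ℝ} (hb : 0 < b) :
    IsBandlimitedKernel fun v ↦ b * K (b * v) := by
  obtain ⟨w, hw, hwc, hwK⟩ := hK.exists_fourier_eq
  refine ⟨fun v ↦ mul_nonneg hb.le (hK.nonneg _),
    (hK.integrable.comp_mul_left' hb.ne').const_mul b, ?_, fun t ↦ w (t / b), by fun_prop,
    ?_, fun v ↦ ?_⟩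
  · rw [integral_const_mul, Measure.integral_comp_mul_left, hK.integral_eq_one]
    simp [abs_of_pos hb, hb.ne']
  · simpa [div_eq_inv_mul] using hwc.comp_smul (inv_ne_zero hb.ne')
  · rw [fourier_comp_div w hb, hwK]
    push_cast
    rfl

theorem exists_setIntegral_scale_ge (hK : IsBandlimitedKernel K) {δ ε : ℝ} (hδ : 0 < δ)
    (hε : 0 < ε) : ∃ b > 0, 1 - ε ≤ ∫ v in Set.Icc (-δ) δ, b * K (b * v) := by
  have hlim : Tendsto (fun R : ℝ ↦ ∫ v in (-R)..R, K v) atTop (𝓝 1) :=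
    hK.integral_eq_one ▸ intervalIntegral_tendsto_integral hK.integrable
      tendsto_neg_atTop_atBot tendsto_id
  obtain ⟨R, hR, hR0⟩ :=
    ((hlim.eventually_const_le (sub_lt_self 1 hε)).and (eventually_gt_atTop 0)).exists
  refine ⟨R / δ, by positivity, hR.trans_eq ?_⟩
  rw [integral_Icc_eq_integral_Ioc, ← intervalIntegral.integral_of_le (by linarith),
    intervalIntegral.integral_const_mul, intervalIntegral.mul_integral_comp_mul_left]
  congr 1 <;> field_simp

end IsBandlimitedKernel

theorem exists_isBandlimitedKernel_setIntegral_ge {δ ε : ℝ} (hδ : 0 < δ) (hε : 0 < ε) :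
    ∃ K, IsBandlimitedKernel K ∧ 1 - ε ≤ ∫ v in Set.Icc (-δ) δ, K v := by
  obtain ⟨K, hK⟩ := exists_isBandlimitedKernel
  obtain ⟨b, hb, hbK⟩ := hK.exists_setIntegral_scale_ge hδ hε
  exact ⟨_, hK.scale hb, hbK⟩

/-- The one-sided Laplace transform `∫₀^∞ e^{-su} f(u) du`, used for bounded `f` and `Re s > 0`; it
is the junk value `0` where the integrand is not integrable. -/
noncomputable def laplaceTransform (f : ℝ → ℂ) (s : ℂ) : ℂ :=
  ∫ u in Set.Ioi (0 : ℝ), Complex.exp (-s * u) * f u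

section BoundaryValues

variable {f : ℝ → ℂ} {C : ℝ}

lemma integrableOn_exp_neg_mul (hf : Measurable f) (hfC : ∀ u, ‖f u‖ ≤ C) {s : ℂ} (hs : 0 < s.re) :
    IntegrableOn (fun u : ℝ ↦ Complex.exp (-s * u) * f u) (Set.Ioi 0) :=
  (integrableOn_exp_mul_complex_Ioi (by simpa using hs) 0).mul_bdd hf.aestronglyMeasurable
    (.of_forall hfC)

lemma fourier_indicator_exp_neg_mul (f : ℝ → ℂ) (σ t : ℝ) :
    𝓕 ((Set.Ioi 0).indicator fun u : ℝ ↦ Complex.exp (-σ * u) * f u) t =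
      laplaceTransform f (σ + 2 * π * t * Complex.I) := by
  rw [laplaceTransform, ← integral_indicator measurableSet_Ioi,
    Real.fourier_real_eq_integral_exp_smul]
  congr 1 with u
  by_cases hu : u ∈ Set.Ioi 0
  · simp only [Set.indicator_of_mem hu, smul_eq_mul, ← mul_assoc, ← Complex.exp_add]
    congr 2
    push_cast
    ring
  · simp [Set.indicator_of_notMem hu]

lemma integral_fourier_sub_mul_exp_neg_mul {w : ℝ → ℂ} (hw : Integrable w) (hf : Measurable f)
    (hfC : ∀ u, ‖f u‖ ≤ C) {σ : ℝ} (hσ : 0 < σ) (y : ℝ) :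
    ∫ u in Set.Ioi 0, 𝓕 w (u - y) * (Complex.exp (-σ * u) * f u) =
      𝓕⁻ (fun t : ℝ ↦ w t * laplaceTransform f (σ + 2 * π * t * Complex.I)) y := by
  have hint := (integrableOn_exp_neg_mul hf hfC (s := σ) (by simpa)).integrable_indicator
    measurableSet_Ioi
  simp only [← fourier_indicator_exp_neg_mul, ← integral_fourier_sub_mul hw hint,
    ← integral_indicator measurableSet_Ioi, Set.indicator_mul_right]

lemma tendsto_setIntegral_mul_exp_neg_mul {k : ℝ → ℂ} (hk : Integrable k) (hf : Measurable f)
    (hfC : ∀ u, ‖f u‖ ≤ C) :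
    Tendsto (fun σ : ℝ ↦ ∫ u in Set.Ioi 0, k u * (Complex.exp (-σ * u) * f u)) (𝓝[>] 0)
      (𝓝 (∫ u in Set.Ioi 0, k u * f u)) := by
  refine tendsto_integral_filter_of_dominated_convergence (fun u ↦ ‖k u‖ * C)
    (.of_forall fun σ ↦ ?_) ?_ (hk.norm.mul_const C).integrableOn (.of_forall fun u ↦ ?_)
  · exact hk.aestronglyMeasurable.restrict.mul (by fun_prop)
  · filter_upwards [self_mem_nhdsWithin] with σ (hσ : 0 < σ)
    filter_upwards [ae_restrict_mem measurableSet_Ioi] with u (hu : 0 < u)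
    have hexp : ‖Complex.exp (-σ * u)‖ ≤ 1 := by
      simpa [Complex.norm_exp] using (mul_pos hσ hu).le
    grw [norm_mul, norm_mul, hexp, hfC u, one_mul]
  · have hcont : Continuous fun σ : ℝ ↦ k u * (Complex.exp (-σ * u) * f u) := by fun_prop
    simpa using (hcont.tendsto 0).mono_left nhdsWithin_le_nhds

variable {w : ℝ → ℂ} {G : ℂ → ℂ}

lemma continuousOn_fourierInv_mul_line (hw : Continuous w) (hwc : HasCompactSupport w)
    (hG : ContinuousOn G {s | 0 ≤ s.re}) (y : ℝ) :
    ContinuousOn (fun σ : ℝ ↦ 𝓕⁻ (fun t : ℝ ↦ w t * G (σ + 2 * π * t * Complex.I)) y)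
      (Set.Ici 0) := by
  simp only [Real.fourierInv_eq, Circle.smul_def]
  refine continuousOn_integral_of_compact_support hwc.isCompact ?_ fun σ t _ ht ↦ ?_
  · have hline : Continuous fun q : ℝ × ℝ ↦ (q.1 + 2 * π * q.2 * Complex.I : ℂ) := by fun_prop
    have hGline := hG.comp (s := Set.Ici 0 ×ˢ Set.univ) hline.continuousOn
      fun q hq ↦ by simpa using hq.1
    have := Real.continuous_fourierChar
    have hwchar : Continuous fun q : ℝ × ℝ ↦ (Real.fourierChar (inner ℝ q.2 y) : ℂ) * w q.2 := by
      fun_prop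
    exact (hwchar.continuousOn.mul hGline).congr fun q _ ↦ (mul_assoc _ _ _).symm
  · simp [image_eq_zero_of_notMem_tsupport ht]

-- For `σ > 0` both sides carry an extra factor `e^{-σu}`, resp. a shift by `σ`; let `σ → 0⁺`.
theorem setIntegral_fourier_sub_mul_eq_fourierInv (hw : Continuous w) (hwc : HasCompactSupport w)
    (hw_int : Integrable (𝓕 w)) (hf : Measurable f) (hfC : ∀ u, ‖f u‖ ≤ C)
    (hG : ContinuousOn G {s | 0 ≤ s.re}) (hfG : ∀ s, 0 < s.re → laplaceTransform f s = G s)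
    (y : ℝ) :
    ∫ u in Set.Ioi 0, 𝓕 w (u - y) * f u =
      𝓕⁻ (fun t : ℝ ↦ w t * G (2 * π * t * Complex.I)) y := by
  have hleft := tendsto_setIntegral_mul_exp_neg_mul (hw_int.comp_sub_right y) hf hfC
  have hright := (continuousOn_fourierInv_mul_line hw hwc hG y 0 Set.self_mem_Ici).mono_left
    (nhdsWithin_mono 0 Set.Ioi_subset_Ici_self)
  simp only [Complex.ofReal_zero, zero_add] at hright
  refine tendsto_nhds_unique (hleft.congr' ?_) hright
  filter_upwards [self_mem_nhdsWithin] with σ hσ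
  rw [integral_fourier_sub_mul_exp_neg_mul (hw.integrable_of_hasCompactSupport hwc) hf hfC hσ]
  congr! 2 with t
  rw [hfG _ (by simpa using hσ)]

theorem tendsto_setIntegral_fourier_sub_mul (hw : Continuous w) (hwc : HasCompactSupport w)
    (hw_int : Integrable (𝓕 w)) (hf : Measurable f) (hfC : ∀ u, ‖f u‖ ≤ C)
    (hG : ContinuousOn G {s | 0 ≤ s.re}) (hfG : ∀ s, 0 < s.re → laplaceTransform f s = G s) :
    Tendsto (fun y ↦ ∫ u in Set.Ioi 0, 𝓕 w (u - y) * f u) atTop (𝓝 0) := by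
  simp only [setIntegral_fourier_sub_mul_eq_fourierInv hw hwc hw_int hf hfC hG hfG,
    Real.fourierInv_eq_fourier_neg]
  exact (Real.zero_at_infty_fourier _).comp (tendsto_neg_atTop_atBot.mono_right atBot_le_cocompact)

end BoundaryValues

section Tauberian

variable {F : ℝ → ℝ} {G : ℂ → ℂ} {C A : ℝ}

theorem tendsto_integral_mul_comp_add_of_tendsto {k g : ℝ → ℂ} {L : ℂ} (hk : Integrable k)
    (hg : Measurable g) (hgC : ∀ u, ‖g u‖ ≤ C) (hgL : Tendsto g atTop (𝓝 L)) :
    Tendsto (fun y ↦ ∫ v, k v * g (y + v)) atTop (𝓝 ((∫ v, k v) * L)) := by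
  rw [← integral_mul_const]
  refine tendsto_integral_filter_of_dominated_convergence (fun v ↦ ‖k v‖ * C)
    (.of_forall fun y ↦
      hk.aestronglyMeasurable.mul (by fun_prop : Measurable _).aestronglyMeasurable)
    (.of_forall fun y ↦ .of_forall fun v ↦ ?_) (hk.norm.mul_const C)
    (.of_forall fun v ↦ (hgL.comp (tendsto_atTop_add_const_right _ v tendsto_id)).const_mul _)
  grw [norm_mul, hgC]

-- The boundary-value argument controls the values of `f` on `(0, ∞)`; those on `(-∞, 0]` only meet
-- the tail of `K`.
theorem IsBandlimitedKernel.tendsto_integral_mul_comp_add {K : ℝ → ℝ}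
    (hK : IsBandlimitedKernel K)
    {f : ℝ → ℂ} (hf : Measurable f) (hfC : ∀ u, ‖f u‖ ≤ C)
    (hG : ContinuousOn G {s | 0 ≤ s.re}) (hfG : ∀ s, 0 < s.re → laplaceTransform f s = G s) :
    Tendsto (fun y ↦ ∫ v, K v * f (y + v)) atTop (𝓝 0) := by
  obtain ⟨w, hw, hwc, hwK⟩ := hK.exists_fourier_eq
  have hK_int : Integrable fun v ↦ (K v : ℂ) := hK.integrable.ofReal
  have hright : Tendsto (fun y ↦ ∫ u in Set.Ioi 0, K (u - y) * f u) atTop (𝓝 0) := by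
    simpa only [hwK] using
      tendsto_setIntegral_fourier_sub_mul hw hwc (funext hwK ▸ hK_int) hf hfC hG hfG
  have hleft : Tendsto (fun y ↦ ∫ v, K v * (Set.Iic 0).indicator f (y + v)) atTop (𝓝 0) := by
    have hzero : Tendsto ((Set.Iic 0).indicator f) atTop (𝓝 0) :=
      tendsto_const_nhds.congr' <| (eventually_gt_atTop 0).mono fun u hu ↦ by
        simp [Set.indicator_of_notMem, hu.not_ge]
    simpa using tendsto_integral_mul_comp_add_of_tendsto hK_int (hf.indicator measurableSet_Iic)
      (fun u ↦ (norm_indicator_le_norm_self f u).trans (hfC u)) hzero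
  have hsplit (y : ℝ) : ∫ v, K v * f (y + v) =
      (∫ u in Set.Ioi 0, K (u - y) * f u) + ∫ v, K v * (Set.Iic 0).indicator f (y + v) := by
    rw [← integral_sub_right_eq_self _ y,
      ← integral_sub_right_eq_self (fun v ↦ K v * (Set.Iic 0).indicator f (y + v)) y]
    simp only [add_sub_cancel, ← Set.indicator_mul_right _ fun u ↦ (K (u - y) : ℂ)]
    rw [integral_indicator measurableSet_Iic, add_comm, ← Set.compl_Iic,
      integral_add_compl measurableSet_Iic
        ((hK_int.comp_sub_right y).mul_bdd hf.aestronglyMeasurable (.of_forall hfC))]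
  simpa only [hsplit, add_zero] using hright.add hleft

lemma measurable_of_monotone_exp_mul (hF : Monotone fun u ↦ Real.exp u * F u) : Measurable F := by
  have : F = fun u ↦ Real.exp (-u) * (Real.exp u * F u) := by
    ext u
    rw [← mul_assoc, ← Real.exp_add, neg_add_cancel, Real.exp_zero, one_mul]
  rw [this]
  have := hF.measurable
  fun_prop

lemma le_exp_sub_mul (hF : Monotone fun u ↦ Real.exp u * F u) {x y : ℝ} (hxy : x ≤ y) :
    F x ≤ Real.exp (y - x) * F y := by
  refine le_of_mul_le_mul_left ((hF hxy).trans_eq ?_) (Real.exp_pos x)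
  rw [← mul_assoc, ← Real.exp_add, add_sub_cancel]

namespace IsBandlimitedKernel

variable {K : ℝ → ℝ} {δ : ℝ}

lemma setIntegral_le_one (hK : IsBandlimitedKernel K) (s : Set ℝ) : ∫ v in s, K v ≤ 1 :=
  hK.integral_eq_one ▸ setIntegral_le_integral hK.integrable (.of_forall hK.nonneg)

lemma integrable_mul_comp_add (hK : IsBandlimitedKernel K) (hF : Measurable F) (hF0 : ∀ u, 0 ≤ F u)
    (hFC : ∀ u, F u ≤ C) (y : ℝ) : Integrable fun v ↦ K v * F (y + v) :=
  hK.integrable.mul_bdd (c := C) (by fun_prop : Measurable _).aestronglyMeasurable <|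
    .of_forall fun v ↦ by simpa [abs_of_nonneg (hF0 _)] using hFC _

theorem le_integral_mul_comp_add (hK : IsBandlimitedKernel K) (hF0 : ∀ u, 0 ≤ F u)
    (hFC : ∀ u, F u ≤ C) (hF : Monotone fun u ↦ Real.exp u * F u) (hδ : 0 ≤ δ) (y : ℝ) :
    F y ≤ (∫ v, K v * F (y + δ + v)) +
      C * (1 - Real.exp (-(2 * δ)) * ∫ v in Set.Icc (-δ) δ, K v) := by
  set m := ∫ v in Set.Icc (-δ) δ, K v
  have hint := hK.integrable_mul_comp_add (measurable_of_monotone_exp_mul hF) hF0 hFC (y + δ)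
  have hwindow : Real.exp (-(2 * δ)) * F y * m ≤ ∫ v, K v * F (y + δ + v) := calc
    _ = ∫ v in Set.Icc (-δ) δ, K v * (Real.exp (-(2 * δ)) * F y) := by
      rw [integral_mul_const, mul_comm]
    _ ≤ ∫ v in Set.Icc (-δ) δ, K v * F (y + δ + v) := by
      refine setIntegral_mono_on (hK.integrable.mul_const _).integrableOn hint.integrableOn
        measurableSet_Icc fun v ⟨hv, hv'⟩ ↦ mul_le_mul_of_nonneg_left ?_ (hK.nonneg v)
      have hshift := le_exp_sub_mul hF (show y ≤ y + δ + v by linarith)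
      have hexp : Real.exp (y + δ + v - y) ≤ Real.exp (2 * δ) := by gcongr; linarith
      rw [Real.exp_neg, inv_mul_le_iff₀ (Real.exp_pos _)]
      exact hshift.trans (by gcongr; exact hF0 _)
    _ ≤ ∫ v, K v * F (y + δ + v) :=
      setIntegral_le_integral hint (.of_forall fun v ↦ mul_nonneg (hK.nonneg v) (hF0 _))
  have hm : Real.exp (-(2 * δ)) * m ≤ 1 :=
    mul_le_one₀ (Real.exp_le_one_iff.mpr (by linarith)) (integral_nonneg hK.nonneg)
      (hK.setIntegral_le_one _)
  linarith [mul_le_mul_of_nonneg_right (hFC y) (sub_nonneg.mpr hm)]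

theorem integral_mul_comp_sub_add_le (hK : IsBandlimitedKernel K) (hF0 : ∀ u, 0 ≤ F u)
    (hFC : ∀ u, F u ≤ C) (hF : Monotone fun u ↦ Real.exp u * F u) (hδ : 0 ≤ δ) (y : ℝ) :
    ∫ v, K v * F (y - δ + v) ≤
      F y + C * (Real.exp (2 * δ) - ∫ v in Set.Icc (-δ) δ, K v) := by
  set m := ∫ v in Set.Icc (-δ) δ, K v
  have hint := hK.integrable_mul_comp_add (measurable_of_monotone_exp_mul hF) hF0 hFC (y - δ)
  have hwindow : ∫ v in Set.Icc (-δ) δ, K v * F (y - δ + v) ≤ m * (Real.exp (2 * δ) * F y) := by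
    rw [← integral_mul_const]
    refine setIntegral_mono_on hint.integrableOn (hK.integrable.mul_const _).integrableOn
      measurableSet_Icc fun v ⟨hv, hv'⟩ ↦ mul_le_mul_of_nonneg_left ?_ (hK.nonneg v)
    refine (le_exp_sub_mul hF (show y - δ + v ≤ y by linarith)).trans ?_
    gcongr
    exacts [hF0 y, by linarith]
  have htail : ∫ v in (Set.Icc (-δ) δ)ᶜ, K v * F (y - δ + v) ≤ (1 - m) * C := by
    rw [← hK.integral_eq_one, ← integral_add_compl measurableSet_Icc hK.integrable,
      add_sub_cancel_left, ← integral_mul_const]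
    exact setIntegral_mono hint.integrableOn (hK.integrable.mul_const C).integrableOn
      fun v ↦ mul_le_mul_of_nonneg_left (hFC _) (hK.nonneg v)
  have hexp : 1 ≤ Real.exp (2 * δ) := Real.one_le_exp (by linarith)
  calc ∫ v, K v * F (y - δ + v)
      ≤ m * (Real.exp (2 * δ) * F y) + (1 - m) * C := by
        rw [← integral_add_compl measurableSet_Icc hint]
        gcongr
    _ ≤ 1 * (Real.exp (2 * δ) * F y) + (1 - m) * C := by
        gcongr
        exacts [mul_nonneg (Real.exp_pos _).le (hF0 y), hK.setIntegral_le_one _]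
    _ ≤ F y + C * (Real.exp (2 * δ) - m) := by
        linarith [mul_le_mul_of_nonneg_left (hFC y) (sub_nonneg.mpr hexp)]

end IsBandlimitedKernel

theorem IsBandlimitedKernel.tendsto_integral_mul_comp_add_real {K : ℝ → ℝ}
    (hK : IsBandlimitedKernel K) (hF : Measurable F) (hF0 : ∀ u, 0 ≤ F u) (hFC : ∀ u, F u ≤ C)
    (hG : ContinuousOn G {s | 0 ≤ s.re})
    (hFG : ∀ s, 0 < s.re → laplaceTransform (fun u ↦ F u - A) s = G s) :
    Tendsto (fun y ↦ ∫ v, K v * F (y + v)) atTop (𝓝 A) := by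
  have hbound (u : ℝ) : ‖(F u - A : ℂ)‖ ≤ C + |A| := by
    grw [norm_sub_le, Complex.norm_real, Complex.norm_real, Real.norm_of_nonneg (hF0 u), hFC u,
      Real.norm_eq_abs]
  have hlim := hK.tendsto_integral_mul_comp_add (by fun_prop) hbound hG hFG
  have hreal (y : ℝ) : ∫ v, (K v : ℂ) * (F (y + v) - A) =
      (((∫ v, K v * F (y + v)) - A : ℝ) : ℂ) := by
    have hsub : ∫ v, K v * (F (y + v) - A) = (∫ v, K v * F (y + v)) - A := by
      simp only [mul_sub]
      rw [integral_sub (hK.integrable_mul_comp_add hF hF0 hFC y) (hK.integrable.mul_const A),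
        integral_mul_const, hK.integral_eq_one, one_mul]
    rw [← hsub, ← integral_complex_ofReal]
    push_cast
    rfl
  simp only [hreal] at hlim
  rw [← tendsto_sub_nhds_zero_iff]
  exact Filter.tendsto_ofReal_iff.mp hlim

theorem tendsto_of_continuousOn_laplaceTransform (hF0 : ∀ u, 0 ≤ F u) (hFC : ∀ u, F u ≤ C)
    (hF : Monotone fun u ↦ Real.exp u * F u) (hG : ContinuousOn G {s | 0 ≤ s.re})
    (hFG : ∀ s, 0 < s.re → laplaceTransform (fun u ↦ F u - A) s = G s) :
    Tendsto F atTop (𝓝 A) := by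
  have herr_upper : Tendsto (fun δ : ℝ ↦ δ + C * (1 - Real.exp (-(2 * δ)) * (1 - δ)))
      (𝓝 0) (𝓝 0) :=
    Continuous.tendsto' (by fun_prop) _ _ (by simp)
  have herr_lower : Tendsto (fun δ : ℝ ↦ δ + C * (Real.exp (2 * δ) - (1 - δ))) (𝓝 0) (𝓝 0) :=
    Continuous.tendsto' (by fun_prop) _ _ (by simp)
  have hC : 0 ≤ C := (hF0 0).trans (hFC 0)
  refine Metric.tendsto_nhds.mpr fun ε hε ↦ ?_
  obtain ⟨δ, ⟨hupper, hlower⟩, hδ⟩ := (((herr_upper.eventually_lt_const hε).and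
    (herr_lower.eventually_lt_const hε)).filter_mono nhdsWithin_le_nhds |>.and
    (self_mem_nhdsWithin (s := Set.Ioi 0))).exists
  obtain ⟨K, hK, hmass⟩ := exists_isBandlimitedKernel_setIntegral_ge hδ hδ
  have hlim := hK.tendsto_integral_mul_comp_add_real (measurable_of_monotone_exp_mul hF) hF0 hFC
    hG hFG
  have hlim_add := hlim.comp (tendsto_atTop_add_const_right _ δ tendsto_id)
  have hlim_sub := hlim.comp (tendsto_atTop_add_const_right _ (-δ) tendsto_id)
  filter_upwards [hlim_add.eventually_lt_const (lt_add_of_pos_right A hδ),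
    hlim_sub.eventually_const_lt (sub_lt_self A hδ)] with y hy_add hy_sub
  have hle := hK.le_integral_mul_comp_add hF0 hFC hF (le_of_lt hδ) y
  have hge := hK.integral_mul_comp_sub_add_le hF0 hFC hF (le_of_lt hδ) y
  simp only [Function.comp_apply, id_eq, ← sub_eq_add_neg] at hy_add hy_sub
  rw [Real.dist_eq, abs_sub_lt_iff]
  constructor
  · have : C * (1 - Real.exp (-(2 * δ)) * ∫ v in Set.Icc (-δ) δ, K v) ≤
        C * (1 - Real.exp (-(2 * δ)) * (1 - δ)) := by gcongr
    linarith
  · have : C * (Real.exp (2 * δ) - ∫ v in Set.Icc (-δ) δ, K v) ≤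
        C * (Real.exp (2 * δ) - (1 - δ)) := by gcongr
    linarith

end Tauberian

lemma laplaceTransform_const {s : ℂ} (hs : 0 < s.re) (c : ℂ) :
    laplaceTransform (fun _ ↦ c) s = c / s := by
  rw [laplaceTransform, integral_mul_const, integral_exp_mul_complex_Ioi (by simpa using hs)]
  simp [div_eq_inv_mul]

lemma laplaceTransform_sub {f g : ℝ → ℂ} {s : ℂ}
    (hf : IntegrableOn (fun u : ℝ ↦ Complex.exp (-s * u) * f u) (Set.Ioi 0))
    (hg : IntegrableOn (fun u : ℝ ↦ Complex.exp (-s * u) * g u) (Set.Ioi 0)) :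
    laplaceTransform (fun u ↦ f u - g u) s = laplaceTransform f s - laplaceTransform g s := by
  simp only [laplaceTransform, mul_sub]
  exact integral_sub hf hg

/-- The summatory function `x ↦ ∑_{1 ≤ k ≤ x} f k` of an arithmetic function; the value `f 0` is
ignored, as it is in `LSeries`. It generalizes the Chebyshev function `ψ` in the Wiener–Ikehara
theorem. -/
noncomputable def summatory (f : ℕ → ℝ) (x : ℝ) : ℝ := ∑ k ∈ Finset.Icc 1 ⌊x⌋₊, f k

section WienerIkehara

open Asymptotics

variable {f : ℕ → ℝ} {G : ℂ → ℂ} {A : ℝ}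

lemma summatory_nonneg (hf : ∀ n, 0 ≤ f n) (x : ℝ) : 0 ≤ summatory f x :=
  Finset.sum_nonneg fun k _ ↦ hf k

lemma summatory_mono (hf : ∀ n, 0 ≤ f n) : Monotone (summatory f) := fun _ _ hxy ↦
  Finset.sum_le_sum_of_subset_of_nonneg (by gcongr) fun k _ _ ↦ hf k

lemma exists_summatory_le_mul
    (hO : (fun n ↦ ∑ k ∈ Finset.Icc 1 n, f k) =O[atTop] fun n ↦ (n : ℝ)) :
    ∃ C, ∀ x, 0 ≤ x → summatory f x ≤ C * x := by
  obtain ⟨C, hC, hbound⟩ := bound_of_isBigO_nat_atTop hO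
  refine ⟨C, fun x hx ↦ ?_⟩
  obtain hfloor | hfloor := eq_or_ne ⌊x⌋₊ 0
  · simpa [summatory, hfloor] using by positivity
  · calc summatory f x ≤ C * ‖(⌊x⌋₊ : ℝ)‖ :=
          (Real.le_norm_self _).trans (hbound (by exact_mod_cast hfloor))
      _ ≤ C * x := by
          rw [Real.norm_natCast]
          gcongr
          exact Nat.floor_le hx

lemma laplaceTransform_exp_neg_mul_summatory_exp (hf : ∀ n, 0 ≤ f n)
    (hO : (fun n ↦ ∑ k ∈ Finset.Icc 1 n, f k) =O[atTop] fun n ↦ (n : ℝ)) {s : ℂ} (hs : 0 < s.re) :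
    laplaceTransform (fun u ↦ (Real.exp (-u) * summatory f (Real.exp u) : ℝ)) s =
      LSeries (fun n ↦ f n) (s + 1) / (s + 1) := by
  have hs1 : s + 1 ≠ 0 := Complex.ne_zero_of_re_pos (by simpa using by linarith)
  have himage : Real.exp '' Set.Ioi 0 = Set.Ioi 1 := by rw [Real.image_exp_Ioi, Real.exp_zero]
  rw [LSeries_eq_mul_integral_of_nonneg f zero_le_one (by simpa) (by simpa) hf,
    mul_div_cancel_left₀ _ hs1, laplaceTransform, ← himage,
    integral_image_eq_integral_abs_deriv_smul measurableSet_Ioi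
      (fun u _ ↦ (Real.hasDerivAt_exp u).hasDerivWithinAt) Real.exp_injective.injOn]
  congr 1 with u
  have hexp : Complex.exp (-s * u) * Complex.exp (-u) =
      Complex.exp u * Complex.exp (u * -(s + 1 + 1)) := by
    rw [← Complex.exp_add, ← Complex.exp_add]
    ring_nf
  rw [abs_of_pos (Real.exp_pos u), Complex.real_smul,
    Complex.cpow_def_of_ne_zero (by exact_mod_cast (Real.exp_pos u).ne'),
    ← Complex.ofReal_log (Real.exp_pos u).le, Real.log_exp, summatory]
  push_cast
  linear_combination (∑ k ∈ Finset.Icc 1 ⌊Real.exp u⌋₊, (f k : ℂ)) * hexp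

theorem tendsto_summatory_div_of_continuousOn_LSeries (hf : ∀ n, 0 ≤ f n)
    (hO : (fun n ↦ ∑ k ∈ Finset.Icc 1 n, f k) =O[atTop] fun n ↦ (n : ℝ))
    (hG : ContinuousOn G {s | 1 ≤ s.re})
    (hfG : ∀ s, 1 < s.re → LSeries (fun n ↦ f n) s - A / (s - 1) = G s) :
    Tendsto (fun x ↦ summatory f x / x) atTop (𝓝 A) := by
  obtain ⟨C, hC⟩ := exists_summatory_le_mul hO
  let F : ℝ → ℝ := fun u ↦ Real.exp (-u) * summatory f (Real.exp u)
  have hF0 (u : ℝ) : 0 ≤ F u := mul_nonneg (Real.exp_pos _).le (summatory_nonneg hf _)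
  have hFC (u : ℝ) : F u ≤ C := by
    simp only [F]
    rw [Real.exp_neg, inv_mul_le_iff₀ (Real.exp_pos u), mul_comm]
    exact hC _ (Real.exp_pos u).le
  have hF : Monotone fun u ↦ Real.exp u * F u := by
    simpa [F, ← mul_assoc, ← Real.exp_add, Function.comp_def] using
      (summatory_mono hf).comp Real.exp_monotone
  have hF_lim : Tendsto F atTop (𝓝 A) := by
    refine tendsto_of_continuousOn_laplaceTransform (G := fun s ↦ (G (s + 1) - A) / (s + 1))
      hF0 hFC hF ?_ fun s hs ↦ ?_
    · have hshift : Set.MapsTo (fun s : ℂ ↦ s + 1) {s | 0 ≤ s.re} {s | 1 ≤ s.re} :=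
        fun s hs ↦ by simpa using hs
      exact ((hG.comp (by fun_prop) hshift).sub continuousOn_const).div (by fun_prop)
        fun s hs ↦ Complex.ne_zero_of_re_pos (zero_lt_one.trans_le (hshift hs))
    · have hs0 : s ≠ 0 := Complex.ne_zero_of_re_pos hs
      have hs1 : s + 1 ≠ 0 := Complex.ne_zero_of_re_pos (by simpa using by linarith)
      have hF_meas := measurable_of_monotone_exp_mul hF
      rw [laplaceTransform_sub
          (integrableOn_exp_neg_mul (C := C) (by fun_prop)
            (fun u ↦ by simpa [abs_of_nonneg (hF0 u)] using hFC u) hs)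
          (integrableOn_exp_neg_mul measurable_const (fun _ ↦ le_rfl) hs),
        laplaceTransform_exp_neg_mul_summatory_exp hf hO hs, laplaceTransform_const hs,
        ← hfG (s + 1) (by simpa using hs), add_sub_cancel_right]
      field_simp
      ring
  refine (hF_lim.comp Real.tendsto_log_atTop).congr' ?_
  filter_upwards [eventually_gt_atTop 0] with x hx
  simp [F, Real.exp_neg, Real.exp_log hx, div_eq_inv_mul]

end WienerIkehara

end FourierMethod

section PrimeNumberTheorem

open ArithmeticFunction ArithmeticFunction.vonMangoldt Asymptotics Chebyshev

lemma summatory_residueClass_le_psi {q : ℕ} (a : ZMod q) (x : ℝ) :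
    summatory (residueClass a) x ≤ psi x :=
  Finset.sum_le_sum fun k _ ↦ residueClass_le a k

theorem tendsto_summatory_residueClass_div {q : ℕ} [NeZero q] {a : ZMod q} (ha : IsUnit a) :
    Tendsto (fun x ↦ summatory (residueClass a) x / x) atTop (𝓝 (q.totient : ℝ)⁻¹) := by
  refine tendsto_summatory_div_of_continuousOn_LSeries (residueClass_nonneg a) ?_
    (continuousOn_LFunctionResidueClassAux a) fun s hs ↦ ?_
  · refine .of_bound (Real.log 4 + 4) (.of_forall fun n ↦ ?_)
    rw [Real.norm_of_nonneg (Finset.sum_nonneg fun k _ ↦ residueClass_nonneg a k),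
      Real.norm_natCast]
    simpa [summatory] using
      (summatory_residueClass_le_psi a n).trans (psi_le_const_mul_self n.cast_nonneg)
  · rw [eqOn_LFunctionResidueClassAux ha hs]
    push_cast
    rfl

-- Modulus `1`: Mathlib provides the continuity up to `Re s = 1` in terms of residue classes.
theorem psi_isEquivalent_id : psi ~[atTop] id := by
  have hpsi : summatory (residueClass (1 : ZMod 1)) = psi := by
    ext x
    exact Finset.sum_congr rfl fun n _ ↦ by
      simp [residueClass, Set.indicator, Subsingleton.elim (n : ZMod 1) 1]
  refine isEquivalent_of_tendsto_one ?_
  simpa [hpsi] using! tendsto_summatory_residueClass_div (isUnit_one (M := ZMod 1))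

lemma sqrt_isLittleO_id : Real.sqrt =o[atTop] (id : ℝ → ℝ) := by
  refine isLittleO_of_tendsto' ?_ ?_
  · filter_upwards [eventually_gt_atTop 0] with x hx h using absurd h hx.ne'
  · simpa [Real.sqrt_div_self] using! Real.tendsto_sqrt_atTop.inv_tendsto_atTop

theorem theta_isEquivalent_id : theta ~[atTop] id := by
  simpa using psi_isEquivalent_id.sub_isLittleO
    (isBigO_psi_sub_theta_sqrt.trans_isLittleO sqrt_isLittleO_id)

theorem primeCounting_isEquivalent_div_log :
    (fun x : ℝ ↦ (Nat.primeCounting ⌊x⌋₊ : ℝ)) ~[atTop] fun x ↦ x / Real.log x := by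
  refine IsEquivalent.congr_left ((theta_isEquivalent_id.div .refl).add_isLittleO
    integral_theta_div_log_sq_isLittleO) ?_
  filter_upwards [eventually_ge_atTop 2] with x hx
  exact (primeCounting_eq_theta_div_log_add_integral hx).symm

end PrimeNumberTheorem

section Inversion

open Asymptotics

variable {α : Type*} {l : Filter α} {u v : α → ℝ}

lemma tendsto_div_log_atTop : Tendsto (fun x ↦ x / Real.log x) atTop atTop := by
  refine (Real.tendsto_exp_div_pow_atTop 1).comp Real.tendsto_log_atTop |>.congr' ?_
  filter_upwards [eventually_gt_atTop 0] with x hx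
  simp [Real.exp_log hx]

lemma log_log_isLittleO_log : (fun x ↦ Real.log (Real.log x)) =o[atTop] Real.log :=
  Real.isLittleO_log_id_atTop.comp_tendsto Real.tendsto_log_atTop

lemma log_div_log_isEquivalent_log : (fun x ↦ Real.log (x / Real.log x)) ~[atTop] Real.log := by
  refine (IsEquivalent.refl.sub_isLittleO log_log_isLittleO_log).congr_left ?_
  filter_upwards [eventually_gt_atTop 1] with x hx
  exact (Real.log_div (by positivity) (Real.log_pos hx).ne').symm

lemma log_add_log_log_sub_one_isEquivalent_log :
    (fun x ↦ Real.log x + Real.log (Real.log x) - 1) ~[atTop] Real.log :=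
  (IsEquivalent.refl.add_isLittleO log_log_isLittleO_log).sub_isLittleO
    Real.isLittleO_const_log_atTop

theorem isEquivalent_mul_log_of_isEquivalent_div_log (hu : Tendsto u l atTop)
    (huv : v ~[l] fun a ↦ u a / Real.log (u a)) : u ~[l] fun a ↦ v a * Real.log (v a) := by
  have hlog : (fun a ↦ Real.log (v a)) ~[l] fun a ↦ Real.log (u a) :=
    (huv.log (tendsto_div_log_atTop.comp hu)).trans (log_div_log_isEquivalent_log.comp_tendsto hu)
  refine ((huv.mul hlog).congr_right ?_).symm
  filter_upwards [hu.eventually_gt_atTop 1] with a ha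
  exact div_mul_cancel₀ _ (Real.log_pos ha).ne'

lemma primeCounting_p {n : ℕ} (hn : n ≠ 0) : Nat.primeCounting (p n) = n := by
  rw [p, Nat.primeCounting_eq_primeCounting'_succ, Nat.primeCounting', Nat.count_succ,
    Nat.count_nth_of_infinite Nat.infinite_setOfPred_prime, if_pos (Nat.prime_nth_prime _),
    Nat.sub_one_add_one hn]

lemma tendsto_p_atTop : Tendsto p atTop atTop :=
  tendsto_atTop_mono (f := fun n ↦ n) (fun n ↦ by
    have := Nat.add_two_le_nth_prime (n - 1)
    unfold p
    lia) tendsto_id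

theorem p_isEquivalent_mul_log :
    (fun n ↦ (p n : ℝ)) ~[atTop] fun n ↦ n * Real.log n := by
  have hp : Tendsto (fun n ↦ (p n : ℝ)) atTop atTop :=
    tendsto_natCast_atTop_atTop.comp tendsto_p_atTop
  refine isEquivalent_mul_log_of_isEquivalent_div_log hp
    ((primeCounting_isEquivalent_div_log.comp_tendsto hp).congr_left ?_)
  filter_upwards [eventually_ne_atTop 0] with n hn
  simp [primeCounting_p hn]

theorem p_isEquivalent_mul_log_add_log_log_sub_one :
    (fun n ↦ (p n : ℝ)) ~[atTop] fun n ↦ n * (Real.log n + Real.log (Real.log n) - 1) :=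
  p_isEquivalent_mul_log.trans <| .mul .refl <|
    log_add_log_log_sub_one_isEquivalent_log.symm.comp_tendsto tendsto_natCast_atTop_atTop

end Inversion

theorem nth_prime_refined_asymptotic :
    Tendsto (fun n : ℕ =>
        (p n : ℝ) / (n * (Real.log n + Real.log (Real.log n) - 1)))
      atTop (𝓝 1) := by
  have hlog_pos : ∀ᶠ x : ℝ in atTop, 0 < Real.log x + Real.log (Real.log x) - 1 :=
    (log_add_log_log_sub_one_isEquivalent_log.symm.tendsto_atTop
      Real.tendsto_log_atTop).eventually_gt_atTop 0
  refine (Asymptotics.isEquivalent_iff_tendsto_one ?_).mp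
    p_isEquivalent_mul_log_add_log_log_sub_one
  filter_upwards [tendsto_natCast_atTop_atTop.eventually hlog_pos, eventually_ne_atTop 0]
    with n hpos hn
  positivity
end
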